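/- arXiv:2602.12831 — 3 statements merged into one kernel-verified Lean document; each statement's English description precedes it below -/
import Mathlib

section
/- Let A be a finite set with |A| = 2m and m ≥ 1. Then the product over all perfect matchings M of A of the operators CZ_M equals the complete CZ-block on A: ∏_{M ∈ PM(A)} CZ_M = CZ⟨A⟩, where PM(A) is the set of all perfect matchings of A. (Equivalently, since all CZ gates commute and square to the identity, each unordered pair of A occurs in an odd number of perfect matchings.) -/
open Complex Matrix Finset

/-- n-qubit operators: `2^n × 2^n` complex matrices indexed by bit strings
`x : Fin n → Bool` (qubit `i` of {1,…,n} corresponds to index `i-1 : Fin n`). -/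
abbrev NOp (n : ℕ) := Matrix (Fin n → Bool) (Fin n → Bool) ℂ

noncomputable section

/-- Pauli `X = [[0,1],[1,0]]`. -/
def Xg : Matrix Bool Bool ℂ := fun a b => if a = b then 0 else 1

/-- Pauli `Y = [[0,-i],[i,0]]` (indices `false, true` in this order). -/
def Yg : Matrix Bool Bool ℂ :=
  fun a b => if a = b then 0 else if a then Complex.I else -Complex.I

/-- Pauli `Z = diag(1,-1)`. -/
def Zg : Matrix Bool Bool ℂ := Matrix.diagonal (fun a => if a then -1 else 1)

/-- Hadamard `H = (1/√2)[[1,1],[1,-1]]`. -/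
def Hg : Matrix Bool Bool ℂ :=
  fun a b => ((Real.sqrt 2 : ℝ) : ℂ)⁻¹ * (if a && b then -1 else 1)

/-- Phase gate `P = diag(1, i)`. -/
def Pg : Matrix Bool Bool ℂ := Matrix.diagonal (fun a => if a then Complex.I else 1)

/-- `g_A = ∏_{i ∈ A} g_i`: the n-qubit operator acting as the single-qubit gate `g`
on every qubit of `A` and as the identity on all other qubits.  (Since the factors
`g_i` act on distinct tensor legs, the product is the entrywise formula below;
`layer g {k}` is the single-qubit operator `g_k`.) -/
def layer {n : ℕ} (g : Matrix Bool Bool ℂ) (A : Finset (Fin n)) : NOp n :=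
  fun x y => ∏ j, if j ∈ A then g (x j) (y j) else if x j = y j then 1 else 0

/-- `CZ_{i,j}`: diagonal entry `(-1)^{x_i x_j}` at bit string `x`. -/
def czPair {n : ℕ} (i j : Fin n) : NOp n :=
  Matrix.diagonal (fun x => if x i && x j then -1 else 1)

/-- The complete CZ-block `CZ⟨A⟩ = ∏_{{i,j} ⊆ A, i ≠ j} CZ_{i,j}`,
one factor per unordered pair (2-element subset) of `A`. -/
def czBlock {n : ℕ} (A : Finset (Fin n)) : NOp n :=
  Matrix.diagonal
    (fun x => ∏ p ∈ A.powersetCard 2, if ∀ i ∈ p, x i = true then (-1 : ℂ) else 1)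

/-- `CZ_M = ∏_{{i,j} ∈ M} CZ_{i,j}` for a set `M` of unordered pairs
(2-element Finsets), e.g. a perfect matching. -/
def czSet {n : ℕ} (M : Finset (Finset (Fin n))) : NOp n :=
  Matrix.diagonal
    (fun x => ∏ p ∈ M, if ∀ i ∈ p, x i = true then (-1 : ℂ) else 1)

/-- `M` is a perfect matching of the finite set `A`: a partition of `A`
into unordered pairs (2-element subsets). -/
def IsPerfectMatching {α : Type*} [DecidableEq α] (A : Finset α)
    (M : Finset (Finset α)) : Prop :=
  (∀ p ∈ M, p.card = 2) ∧ (∀ p ∈ M, ∀ q ∈ M, p ≠ q → Disjoint p q) ∧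
    M.biUnion id = A

/-- `CX_{A→B} = ∏_{i∈A, j∈B} CX_{i→j}` for disjoint `A`, `B`: the permutation
operator sending basis state `y` to the state whose bit at each `j ∈ B` is
`y_j ⊕ (⊕_{i∈A} y_i)`, all other bits unchanged (this is the product of the
individual commuting CNOTs `CX_{i→j}`, which replace `y_j` by `y_j ⊕ y_i`). -/
def cxBlock {n : ℕ} (A B : Finset (Fin n)) : NOp n :=
  fun x y =>
    if x = (fun j => if j ∈ B then
        xor (y j) (Nat.bodd (A.filter (fun i => y i = true)).card) else y j)
    then 1 else 0

end

open scoped Classical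

/-- All `CZ_M` operators are diagonal, hence commute. -/
lemma czSet_commute {n : ℕ} (M₁ M₂ : Finset (Finset (Fin n))) :
    Commute (czSet M₁) (czSet M₂) := by
  unfold czSet
  rw [Commute, SemiconjBy, Matrix.diagonal_mul_diagonal, Matrix.diagonal_mul_diagonal]
  exact congrArg Matrix.diagonal (funext fun x => mul_comm _ _)

lemma pm_pair_card {n : ℕ} (A p : Finset (Fin n)) (hpA : p ⊆ A) (hp : p.card = 2) :
    (Finset.univ.filter (fun M : Finset (Finset (Fin n)) =>
      IsPerfectMatching A M ∧ p ∈ M)).card =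
    (Finset.univ.filter (fun M : Finset (Finset (Fin n)) =>
      IsPerfectMatching (A \ p) M)).card := by
  have hne : p.Nonempty := Finset.card_pos.mp (by omega)
  have hnot : ∀ M : Finset (Finset (Fin n)), IsPerfectMatching (A \ p) M → p ∉ M := by
    intro M hM hpM
    obtain ⟨a, ha⟩ := hne
    have : a ∈ M.biUnion id := Finset.mem_biUnion.mpr ⟨p, hpM, ha⟩
    rw [hM.2.2] at this
    exact (Finset.mem_sdiff.mp this).2 ha
  refine Finset.card_bij' (fun M _ => M.erase p) (fun M _ => insert p M) ?_ ?_ ?_ ?_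
  · intro M hM
    simp only [Finset.mem_filter, Finset.mem_univ, true_and] at hM ⊢
    obtain ⟨⟨h1, h2, h3⟩, hpM⟩ := hM
    refine ⟨fun q hq => h1 q (Finset.mem_of_mem_erase hq),
      fun q hq r hr => h2 q (Finset.mem_of_mem_erase hq) r (Finset.mem_of_mem_erase hr), ?_⟩
    ext a
    simp only [Finset.mem_biUnion, Finset.mem_erase, id, Finset.mem_sdiff, ← h3]
    constructor
    · rintro ⟨q, ⟨hqp, hq⟩, ha⟩
      exact ⟨⟨q, hq, ha⟩, Finset.disjoint_left.mp (h2 q hq p hpM hqp) ha⟩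
    · rintro ⟨⟨q, hq, ha⟩, hap⟩
      exact ⟨q, ⟨fun h => hap (h ▸ ha), hq⟩, ha⟩
  · intro M hM
    simp only [Finset.mem_filter, Finset.mem_univ, true_and] at hM ⊢
    obtain ⟨h1, h2, h3⟩ := hM
    have hd : ∀ q ∈ M, Disjoint q p := by
      intro q hq
      rw [Finset.disjoint_left]
      intro a ha
      have : a ∈ M.biUnion id := Finset.mem_biUnion.mpr ⟨q, hq, ha⟩
      rw [h3] at this
      exact (Finset.mem_sdiff.mp this).2
    refine ⟨⟨?_, ?_, ?_⟩, Finset.mem_insert_self _ _⟩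
    · intro q hq
      rcases Finset.mem_insert.mp hq with rfl | hq
      · exact hp
      · exact h1 q hq
    · intro q hq r hr hqr
      rcases Finset.mem_insert.mp hq with hq | hq <;>
      rcases Finset.mem_insert.mp hr with hr | hr
      · exact absurd (hq.trans hr.symm) hqr
      · rw [hq]; exact (hd r hr).symm
      · rw [hr]; exact hd q hq
      · exact h2 q hq r hr hqr
    · rw [Finset.biUnion_insert, h3]
      exact Finset.union_sdiff_of_subset hpA
  · intro M hM
    simp only [Finset.mem_filter, Finset.mem_univ, true_and] at hM
    exact Finset.insert_erase hM.2
  · intro M hM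
    simp only [Finset.mem_filter, Finset.mem_univ, true_and] at hM
    exact Finset.erase_insert (hnot M hM)

lemma pm_card_odd {n : ℕ} (m : ℕ) : ∀ A : Finset (Fin n), A.card = 2 * m →
    Odd (Finset.univ.filter (fun M : Finset (Finset (Fin n)) =>
      IsPerfectMatching A M)).card := by
  induction m with
  | zero =>
    intro A hA
    have hA0 : A = ∅ := Finset.card_eq_zero.mp (by simpa using hA)
    subst hA0
    have : (Finset.univ.filter (fun M : Finset (Finset (Fin n)) =>
        IsPerfectMatching ∅ M)) = {∅} := by
      ext M
      simp only [Finset.mem_filter, Finset.mem_univ, true_and, Finset.mem_singleton]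
      constructor
      · rintro ⟨h1, _, h3⟩
        by_contra hM
        obtain ⟨p, hp⟩ := Finset.nonempty_iff_ne_empty.mpr hM
        obtain ⟨a, ha⟩ : p.Nonempty := Finset.card_pos.mp (by rw [h1 p hp]; omega)
        have : a ∈ M.biUnion id := Finset.mem_biUnion.mpr ⟨p, hp, ha⟩
        rw [h3] at this
        simp at this
      · rintro rfl
        simp [IsPerfectMatching]
    rw [this]
    simp
  | succ m ih =>
    intro A hA
    obtain ⟨a, ha⟩ : A.Nonempty := Finset.card_pos.mp (by omega)
    have hU : (Finset.univ.filter (fun M : Finset (Finset (Fin n)) =>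
        IsPerfectMatching A M)) = (A.erase a).biUnion (fun b =>
          Finset.univ.filter (fun M : Finset (Finset (Fin n)) =>
            IsPerfectMatching A M ∧ ({a, b} : Finset (Fin n)) ∈ M)) := by
      ext M
      simp only [Finset.mem_filter, Finset.mem_univ, true_and, Finset.mem_biUnion,
        Finset.mem_erase]
      constructor
      · intro hM
        have h : a ∈ M.biUnion id := by rw [hM.2.2]; exact ha
        obtain ⟨p, hp, hap⟩ := Finset.mem_biUnion.mp h
        have hap : a ∈ p := hap
        obtain ⟨b, hb⟩ : ∃ b, p.erase a = {b} := Finset.card_eq_one.mp (by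
          rw [Finset.card_erase_of_mem hap, hM.1 p hp])
        have hbp : b ∈ p.erase a := by rw [hb]; simp
        have hbA : b ∈ A := by
          rw [← hM.2.2]
          exact Finset.mem_biUnion.mpr ⟨p, hp, Finset.mem_of_mem_erase hbp⟩
        refine ⟨b, ⟨Finset.ne_of_mem_erase hbp, hbA⟩, hM, ?_⟩
        rw [← hb, Finset.insert_erase hap]
        exact hp
      · rintro ⟨b, _, hM, _⟩
        exact hM
    rw [hU, Finset.card_biUnion]
    · apply Finset.odd_sum_iff_odd_card_odd _ |>.mpr
      rw [Finset.filter_true_of_mem]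
      · rw [Finset.card_erase_of_mem ha, hA]
        exact ⟨m, by omega⟩
      · intro b hb
        have hba : a ≠ b := (Finset.ne_of_mem_erase hb).symm
        have hsub : ({a, b} : Finset (Fin n)) ⊆ A := by
          intro c hc
          rcases Finset.mem_insert.mp hc with rfl | hc
          · exact ha
          · rw [Finset.mem_singleton.mp hc]; exact Finset.mem_of_mem_erase hb
        rw [pm_pair_card A _ hsub (Finset.card_pair hba)]
        apply ih
        rw [Finset.card_sdiff_of_subset hsub, Finset.card_pair hba, hA]
        omega
    · intro b hb c hc hbc
      rw [Function.onFun, Finset.disjoint_left]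
      intro M hM hM'
      simp only [Finset.mem_filter, Finset.mem_univ, true_and] at hM hM'
      have hne : ({a, b} : Finset (Fin n)) ≠ {a, c} := by
        intro h
        have : b ∈ ({a, c} : Finset (Fin n)) := by rw [← h]; simp
        rcases Finset.mem_insert.mp this with h | h
        · exact Finset.ne_of_mem_erase hb h
        · exact hbc (Finset.mem_singleton.mp h)
      exact Finset.disjoint_left.mp (hM.1.2.1 _ hM.2 _ hM'.2 hne)
        (Finset.mem_insert_self a _) (Finset.mem_insert_self a _)

lemma noncommProd_czSet {n : ℕ} (s : Finset (Finset (Finset (Fin n))))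
    (h : (s : Set (Finset (Finset (Fin n)))).Pairwise (Function.onFun Commute czSet)) :
    Finset.noncommProd s czSet h = Matrix.diagonal (fun x => ∏ M ∈ s, ∏ p ∈ M,
      if ∀ i ∈ p, x i = true then (-1 : ℂ) else 1) := by
  induction s using Finset.induction_on with
  | empty => simp
  | insert M s hM ih =>
    rw [Finset.noncommProd_insert_of_notMem _ _ _ _ hM, ih, czSet,
      Matrix.diagonal_mul_diagonal]
    simp only [Finset.prod_insert hM]

/-- For `|A| = 2m`, `m ≥ 1`, the product over all perfect matchings `M` of `A`
of the operators `CZ_M` equals the complete CZ-block `CZ⟨A⟩`. -/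
theorem prod_czSet_matchings_eq_czBlock {n : ℕ} (A : Finset (Fin n)) (m : ℕ)
    (hm : 1 ≤ m) (hA : A.card = 2 * m) :
    Finset.noncommProd
      (Finset.univ.filter (fun M : Finset (Finset (Fin n)) => IsPerfectMatching A M))
      czSet (by intro M₁ _ M₂ _ _; exact czSet_commute M₁ M₂) = czBlock A := by
  refine (noncommProd_czSet _ _).trans ?_
  rw [czBlock]
  refine congrArg Matrix.diagonal (funext fun x => ?_)
  rw [Finset.prod_comm' (t' := A.powersetCard 2) (s' := fun p =>
    Finset.univ.filter (fun M : Finset (Finset (Fin n)) => IsPerfectMatching A M ∧ p ∈ M))]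
  · refine Finset.prod_congr rfl fun p hp => ?_
    obtain ⟨hpA, hp2⟩ := Finset.mem_powersetCard.mp hp
    rw [Finset.prod_const, pm_pair_card A p hpA hp2]
    have hodd := pm_card_odd (m - 1) (A \ p) (by
      rw [Finset.card_sdiff_of_subset hpA, hp2, hA]; omega)
    split_ifs
    · exact hodd.neg_one_pow
    · exact one_pow _
  · intro M p
    simp only [Finset.mem_filter, Finset.mem_univ, true_and, Finset.mem_powersetCard]
    constructor
    · rintro ⟨hM, hp⟩
      refine ⟨⟨hM, hp⟩, ?_, hM.1 p hp⟩
      rw [← hM.2.2]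
      exact Finset.subset_biUnion_of_mem id hp
    · rintro ⟨h, _⟩
      exact h
end

section
/- Let n ≥ 3, let S and S̄ be disjoint sets with S ∪ S̄ = {2,…,n−1}, and let U := CZ⟨S̄⟩ · P_{S̄} · H_S · CZ⟨S⟩ · P_S · H_S · CX_{S̄→S} (matrix product, rightmost factor acting first). Then for every k ∈ S̄: U · (X_1 X_k) · U† = X_1 · Y_k · X_S · Z_{S̄∖{k}}. (This is the logical Pauli-constraint mapping X_1 X_k ↦ X_1 Y_k X_S Z_{S̄∖{k}} realized by the compilation strategy C^H_mid for qubits carrying no Hadamard in the C-QSK.) -/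
open Complex Matrix Finset

noncomputable section

/-- The middle qubits `{2, …, n-1}` (qubit `i ∈ {1,…,n}` is index `i-1 : Fin n`). -/
def midSet (n : ℕ) : Finset (Fin n) :=
  Finset.univ.filter (fun j : Fin n => j.val ≠ 0 ∧ j.val ≠ n - 1)

/-- The compiled circuit of the strategy `C^H_mid`:
`U = CZ⟨S̄⟩ · P_{S̄} · H_S · CZ⟨S⟩ · P_S · H_S · CX_{S̄→S}`
(matrix product, rightmost factor acting first), where `Sb` plays the role of `S̄`. -/
def Umid {n : ℕ} (S Sb : Finset (Fin n)) : NOp n :=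
  czBlock Sb * layer Pg Sb * layer Hg S * czBlock S * layer Pg S * layer Hg S *
    cxBlock Sb S

end

namespace UmidAux

/-- Tensor product of single-qubit operators. -/
def tens {n : ℕ} (f : Fin n → Matrix Bool Bool ℂ) : NOp n :=
  fun x y => ∏ j, f j (x j) (y j)

theorem tens_mul {n : ℕ} (f g : Fin n → Matrix Bool Bool ℂ) :
    tens f * tens g = tens (fun j => f j * g j) := by
  ext x y
  simp only [tens, Matrix.mul_apply]
  rw [Finset.prod_univ_sum, Fintype.piFinset_univ]
  simp [Finset.prod_mul_distrib]

theorem tens_conj {n : ℕ} (f : Fin n → Matrix Bool Bool ℂ) :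
    (tens f)ᴴ = tens (fun j => (f j)ᴴ) := by
  ext x y
  simp [tens, Matrix.conjTranspose_apply]

theorem layer_eq {n : ℕ} (g : Matrix Bool Bool ℂ) (A : Finset (Fin n)) :
    layer g A = tens (fun j => if j ∈ A then g else 1) := by
  ext x y
  simp only [layer, tens]
  refine Finset.prod_congr rfl fun j _ => ?_
  split_ifs <;> simp_all [Matrix.one_apply]

theorem tens_one {n : ℕ} : tens (fun _ : Fin n => (1 : Matrix Bool Bool ℂ)) = 1 := by
  ext x y
  simp only [tens, Matrix.one_apply]
  rw [Finset.prod_ite_zero]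
  simp [funext_iff]

theorem tens_eq_zero {n : ℕ} (f : Fin n → Matrix Bool Bool ℂ) (x y : Fin n → Bool)
    (h : tens f x y ≠ 0) (j : Fin n) : f j (x j) (y j) ≠ 0 :=
  (Finset.prod_ne_zero_iff.mp h) j (Finset.mem_univ j)

theorem layer_unitary {n : ℕ} (g : Matrix Bool Bool ℂ) (A : Finset (Fin n))
    (hg : g * gᴴ = 1) : layer g A * (layer g A)ᴴ = 1 := by
  rw [layer_eq, tens_conj, tens_mul, ← tens_one]
  congr 1
  funext j
  split_ifs <;> simp [hg]

theorem sq2 : ((Real.sqrt 2 : ℝ) : ℂ)⁻¹ * ((Real.sqrt 2 : ℝ) : ℂ)⁻¹ = 1 / 2 := by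
  rw [← mul_inv, ← Complex.ofReal_mul, Real.mul_self_sqrt (by norm_num)]
  norm_num

theorem Hg_unitary : Hg * Hgᴴ = 1 := by
  have h := sq2
  ext a b
  cases a <;> cases b <;>
    simp [Hg, Matrix.mul_apply, Matrix.conjTranspose_apply, h] <;> norm_num

theorem Pg_unitary : Pg * Pgᴴ = 1 := by
  ext a b
  cases a <;> cases b <;>
    simp [Pg, Matrix.mul_apply, Matrix.conjTranspose_apply, Matrix.diagonal_apply]

theorem HX : Hg * Xg = Zg * Hg := by
  ext a b
  cases a <;> cases b <;> simp [Hg, Xg, Zg, Matrix.mul_apply, Matrix.diagonal_apply]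

theorem HZ : Hg * Zg = Xg * Hg := by
  ext a b
  cases a <;> cases b <;> simp [Hg, Xg, Zg, Matrix.mul_apply, Matrix.diagonal_apply]

theorem PZ : Pg * Zg = Zg * Pg := by
  ext a b
  cases a <;> cases b <;> simp [Pg, Zg, Matrix.mul_apply, Matrix.diagonal_apply]

theorem PX : Pg * Xg = Yg * Pg := by
  ext a b
  cases a <;> cases b <;> simp [Pg, Xg, Yg, Matrix.mul_apply, Matrix.diagonal_apply]

/-- The sign of a complete CZ block. -/
def czd {n : ℕ} (A : Finset (Fin n)) (x : Fin n → Bool) : ℂ :=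
  ∏ p ∈ A.powersetCard 2, if ∀ i ∈ p, x i = true then (-1 : ℂ) else 1

theorem czBlock_eq {n : ℕ} (A : Finset (Fin n)) : czBlock A = Matrix.diagonal (czd A) := rfl

theorem czd_congr {n : ℕ} (A : Finset (Fin n)) (x y : Fin n → Bool)
    (h : ∀ i ∈ A, x i = y i) : czd A x = czd A y := by
  refine Finset.prod_congr rfl fun p hp => ?_
  have hp := (Finset.mem_powersetCard.mp hp).1
  have : (∀ i ∈ p, x i = true) ↔ (∀ i ∈ p, y i = true) :=
    forall₂_congr fun i hi => by rw [h i (hp hi)]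
  simp only [this]

theorem czd_insert {n : ℕ} (A : Finset (Fin n)) (k : Fin n) (hk : k ∉ A) (x : Fin n → Bool) :
    czd (insert k A) x = czd A x * ∏ i ∈ A, if x k = true ∧ x i = true then (-1 : ℂ) else 1 := by
  unfold czd
  rw [Finset.powersetCard_succ_insert hk, Finset.prod_union]
  · congr 1
    rw [Finset.powersetCard_one, Finset.prod_image, Finset.prod_map]
    · simp
    · intro p hp q hq h
      simp only [Finset.coe_map, Set.mem_image, Finset.mem_coe] at hp hq
      obtain ⟨i, hi, rfl⟩ := hp
      obtain ⟨j, hj, rfl⟩ := hq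
      have : i ∈ insert k ({j} : Finset (Fin n)) := by
        have h' : insert k ({i} : Finset (Fin n)) = insert k {j} := h
        rw [← h']; simp
      have hik : i ≠ k := fun e => hk (e ▸ hi)
      simp [hik] at this
      simp [this]
  · rw [Finset.disjoint_left]
    intro p hp hq
    obtain ⟨q, _, rfl⟩ := Finset.mem_image.mp hq
    exact hk ((Finset.mem_powersetCard.mp hp).1 (Finset.mem_insert_self k q))

theorem czBlock_unitary {n : ℕ} (A : Finset (Fin n)) : czBlock A * (czBlock A)ᴴ = 1 := by
  rw [czBlock_eq, Matrix.diagonal_conjTranspose, Matrix.diagonal_mul_diagonal,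
    ← Matrix.diagonal_one]
  congr 1
  funext x
  simp only [czd, Pi.star_apply, star_prod, ← Finset.prod_mul_distrib]
  refine Finset.prod_eq_one fun p _ => ?_
  split_ifs <;> simp

theorem layerZ {n : ℕ} (A : Finset (Fin n)) :
    layer Zg A = Matrix.diagonal (fun y => ∏ i ∈ A, if y i = true then (-1 : ℂ) else 1) := by
  ext x y
  by_cases h : x = y
  · subst h
    simp only [layer, Zg, Matrix.diagonal_apply_eq, if_true]
    rw [Finset.prod_ite_mem]
    simp
  · rw [Matrix.diagonal_apply_ne _ h]
    obtain ⟨j, hj⟩ := Function.ne_iff.mp h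
    refine Finset.prod_eq_zero (Finset.mem_univ j) ?_
    split_ifs <;> simp [Zg, Matrix.diagonal_apply, hj]

/-- Permutation-like operator. -/
def pm {n : ℕ} (s : (Fin n → Bool) → (Fin n → Bool)) : NOp n :=
  fun x y => if x = s y then 1 else 0

theorem pm_mul {n : ℕ} (s t : (Fin n → Bool) → (Fin n → Bool)) :
    pm s * pm t = pm (s ∘ t) := by
  ext x y
  simp [pm, Matrix.mul_apply]

theorem pm_unitary {n : ℕ} (s : (Fin n → Bool) → (Fin n → Bool)) (h : ∀ x, s (s x) = x) :
    pm s * (pm s)ᴴ = 1 := by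
  have : (pm s)ᴴ = pm s := by
    ext x y
    have : y = s x ↔ x = s y := ⟨fun e => by rw [e, h], fun e => by rw [e, h]⟩
    simp only [pm, Matrix.conjTranspose_apply, this]
    split_ifs <;> simp
  rw [this, pm_mul]
  ext x y
  simp [pm, h, Matrix.one_apply]

/-- Bit flips on `A`. -/
def flip {n : ℕ} (A : Finset (Fin n)) (y : Fin n → Bool) : Fin n → Bool :=
  fun j => xor (y j) (decide (j ∈ A))

theorem layerX {n : ℕ} (A : Finset (Fin n)) : layer Xg A = pm (flip A) := by
  ext x y
  by_cases h : x = flip A y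
  · subst h
    simp only [pm, if_true, layer]
    refine Finset.prod_eq_one fun j _ => ?_
    by_cases hj : j ∈ A <;> simp [hj, flip, Xg]
  · simp only [pm, if_neg h]
    obtain ⟨j, hj⟩ := Function.ne_iff.mp h
    refine Finset.prod_eq_zero (Finset.mem_univ j) ?_
    by_cases hA : j ∈ A
    · simp only [flip, hA, decide_true, Bool.xor_true] at hj
      simp only [hA, if_true, Xg]
      rw [if_pos]
      revert hj
      cases x j <;> cases y j <;> simp
    · simp only [flip, hA, decide_false, Bool.xor_false] at hj
      simp [hA, hj]

/-- Parity of `y` on `A`. -/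
def par {n : ℕ} (A : Finset (Fin n)) (y : Fin n → Bool) : Bool :=
  Nat.bodd (A.filter (fun i => y i = true)).card

/-- Basis action of the CX block. -/
def cxf {n : ℕ} (A B : Finset (Fin n)) (y : Fin n → Bool) : Fin n → Bool :=
  fun j => if j ∈ B then xor (y j) (par A y) else y j

theorem cxBlock_eq {n : ℕ} (A B : Finset (Fin n)) : cxBlock A B = pm (cxf A B) := rfl

theorem par_congr {n : ℕ} (A : Finset (Fin n)) (x y : Fin n → Bool)
    (h : ∀ i ∈ A, x i = y i) : par A x = par A y := by
  unfold par
  rw [Finset.filter_congr (fun i hi => by rw [h i hi])]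

theorem par_flip {n : ℕ} (A : Finset (Fin n)) (k : Fin n) (hk : k ∈ A) (x y : Fin n → Bool)
    (h : ∀ i ∈ A.erase k, x i = y i) (hxy : x k = !(y k)) : par A x = !(par A y) := by
  have key : ∀ z : Fin n → Bool, par A z = xor (z k) (par (A.erase k) z) := by
    intro z
    unfold par
    conv_lhs => rw [← Finset.insert_erase hk, Finset.filter_insert]
    by_cases hz : z k = true
    · rw [if_pos hz, Finset.card_insert_of_notMem (by simp)]
      simp [hz]
    · rw [if_neg hz]
      simp [hz]
  rw [key x, key y, par_congr _ x y h, hxy]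
  cases y k <;> cases par (A.erase k) y <;> rfl

theorem cx_unitary {n : ℕ} (A B : Finset (Fin n)) (hd : Disjoint B A) :
    cxBlock A B * (cxBlock A B)ᴴ = 1 := by
  rw [cxBlock_eq]
  refine pm_unitary _ fun x => ?_
  have hp : par A (cxf A B x) = par A x := by
    refine par_congr _ _ _ fun i hi => ?_
    have : i ∉ B := fun h => Finset.disjoint_left.mp hd h hi
    simp [cxf, this]
  funext j
  by_cases hj : j ∈ B
  · have h1 : cxf A B (cxf A B x) j = xor (cxf A B x j) (par A (cxf A B x)) := if_pos hj
    have h2 : cxf A B x j = xor (x j) (par A x) := if_pos hj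
    rw [h1, h2, hp]
    cases x j <;> cases par A x <;> rfl
  · simp [cxf, hj]

theorem cx_push {n : ℕ} (S Sb : Finset (Fin n)) (hd : Disjoint S Sb) (o k : Fin n)
    (hoS : o ∉ S) (hoSb : o ∉ Sb) (hk : k ∈ Sb) :
    cxBlock Sb S * (layer Xg {o} * layer Xg {k}) =
      (layer Xg {o} * layer Xg {k} * layer Xg S) * cxBlock Sb S := by
  simp only [cxBlock_eq, layerX, pm_mul]
  congr 1
  funext y
  have hok : k ≠ o := fun e => hoSb (e ▸ hk)
  have hp : par Sb (flip {o} (flip {k} y)) = !(par Sb y) := by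
    refine par_flip Sb k hk _ _ (fun i hi => ?_) ?_
    · have h1 := Finset.ne_of_mem_erase hi
      have h2 : i ≠ o := fun e => hoSb (e ▸ Finset.mem_of_mem_erase hi)
      simp [flip, h1, h2]
    · simp [flip, hok]
  funext j
  simp only [Function.comp]
  by_cases hj : j ∈ S
  · have h1 : j ≠ o := fun e => hoS (e ▸ hj)
    have h2 : j ≠ k := fun e => Finset.disjoint_left.mp hd hj (e ▸ hk)
    simp only [cxf, hj, if_true, hp]
    simp [flip, cxf, h1, h2, hj]
  · simp [cxf, flip, hj]

theorem mul_conj_one {n : ℕ} {A B : NOp n} (hA : A * Aᴴ = 1) (hB : B * Bᴴ = 1) :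
    (A * B) * (A * B)ᴴ = 1 := by
  rw [Matrix.conjTranspose_mul, Matrix.mul_assoc, ← Matrix.mul_assoc B, hB, Matrix.one_mul, hA]

/-- Commuting a push through a product. -/
theorem push_mul {n : ℕ} {A B P Q R : NOp n} (hA : A * Q = R * A) (hB : B * P = Q * B) :
    (A * B) * P = R * (A * B) := by
  rw [Matrix.mul_assoc, hB, ← Matrix.mul_assoc, hA, Matrix.mul_assoc]

/-- Single-qubit profile: `X` at `o`, `g` at `k`, `h` on `S`. -/
theorem prof_mul {n : ℕ} (S : Finset (Fin n)) (o k : Fin n) (g h : Matrix Bool Bool ℂ)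
    (hok : k ≠ o) (hoS : o ∉ S) (hkS : k ∉ S) :
    layer Xg {o} * layer g {k} * layer h S =
      tens (fun j => if j = o then Xg else if j = k then g else if j ∈ S then h else 1) := by
  simp only [layer_eq, tens_mul, Finset.mem_singleton]
  congr 1
  funext j
  by_cases h1 : j = o
  · subst h1; simp [hoS, hok.symm]
  · by_cases h2 : j = k
    · subst h2; simp [h1, hkS]
    · simp [h1, h2]

theorem push_S {n : ℕ} (S : Finset (Fin n)) (o k : Fin n) (u g h h' : Matrix Bool Bool ℂ)
    (hok : k ≠ o) (hoS : o ∉ S) (hkS : k ∉ S) (hu : u * h = h' * u) :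
    layer u S * (layer Xg {o} * layer g {k} * layer h S) =
      (layer Xg {o} * layer g {k} * layer h' S) * layer u S := by
  rw [prof_mul S o k g h hok hoS hkS, prof_mul S o k g h' hok hoS hkS, layer_eq, tens_mul,
    tens_mul]
  congr 1
  funext j
  by_cases h1 : j = o
  · subst h1; simp [hoS]
  · by_cases h2 : j = k
    · subst h2; simp [h1, hkS]
    · by_cases h3 : j ∈ S <;> simp [h1, h2, h3, hu]

theorem push_P {n : ℕ} (S Sb : Finset (Fin n)) (hd : Disjoint S Sb) (o k : Fin n)
    (hoS : o ∉ S) (hoSb : o ∉ Sb) (hk : k ∈ Sb) :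
    layer Pg Sb * (layer Xg {o} * layer Xg {k} * layer Xg S) =
      (layer Xg {o} * layer Yg {k} * layer Xg S) * layer Pg Sb := by
  have hok : k ≠ o := fun e => hoSb (e ▸ hk)
  have hkS : k ∉ S := fun e => Finset.disjoint_left.mp hd e hk
  rw [prof_mul S o k Xg Xg hok hoS hkS, prof_mul S o k Yg Xg hok hoS hkS, layer_eq, tens_mul,
    tens_mul]
  congr 1
  funext j
  by_cases h1 : j = o
  · subst h1; simp [hoSb]
  · by_cases h2 : j = k
    · subst h2; simp [h1, hk, PX]
    · by_cases h3 : j ∈ S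
      · have : j ∉ Sb := fun e => Finset.disjoint_left.mp hd h3 e
        simp [h1, h2, h3, this]
      · simp [h1, h2, h3]

theorem push_czS {n : ℕ} (S : Finset (Fin n)) (o k : Fin n)
    (hok : k ≠ o) (hoS : o ∉ S) (hkS : k ∉ S) :
    czBlock S * (layer Xg {o} * layer Xg {k} * layer Zg S) =
      (layer Xg {o} * layer Xg {k} * layer Zg S) * czBlock S := by
  rw [prof_mul S o k Xg Zg hok hoS hkS, czBlock_eq]
  ext x y
  rw [Matrix.diagonal_mul, Matrix.mul_diagonal]
  by_cases h : tens (fun j => if j = o then Xg else if j = k then Xg else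
      if j ∈ S then Zg else 1) x y = 0
  · rw [h]; simp
  · rw [mul_comm, czd_congr S x y]
    intro i hi
    have h1 : i ≠ o := fun e => hoS (e ▸ hi)
    have h2 : i ≠ k := fun e => hkS (e ▸ hi)
    have := tens_eq_zero _ x y h i
    simp only [h1, h2, hi, if_true, if_false] at this
    by_contra hne
    exact this (Matrix.diagonal_apply_ne _ hne)

theorem push_czSb {n : ℕ} (S Sb : Finset (Fin n)) (hd : Disjoint S Sb) (o k : Fin n)
    (hoS : o ∉ S) (hoSb : o ∉ Sb) (hk : k ∈ Sb) :
    czBlock Sb * (layer Xg {o} * layer Yg {k} * layer Xg S) =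
      (layer Xg {o} * layer Yg {k} * layer Xg S * layer Zg (Sb.erase k)) * czBlock Sb := by
  have hok : k ≠ o := fun e => hoSb (e ▸ hk)
  have hkS : k ∉ S := fun e => Finset.disjoint_left.mp hd e hk
  rw [prof_mul S o k Yg Xg hok hoS hkS, czBlock_eq, layerZ]
  ext x y
  rw [Matrix.diagonal_mul, Matrix.mul_diagonal, Matrix.mul_diagonal]
  by_cases h : tens (fun j => if j = o then Xg else if j = k then Yg else
      if j ∈ S then Xg else 1) x y = 0
  · rw [h]; simp
  · rw [mul_comm, mul_assoc]
    congr 1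
    have hE : ∀ i ∈ Sb.erase k, x i = y i := by
      intro i hi
      have h0 := Finset.mem_of_mem_erase hi
      have h1 : i ≠ o := fun e => hoSb (e ▸ h0)
      have h2 : i ≠ k := Finset.ne_of_mem_erase hi
      have h3 : i ∉ S := fun e => Finset.disjoint_left.mp hd e h0
      have := tens_eq_zero _ x y h i
      simp only [h1, h2, h3, if_false] at this
      by_contra hne
      exact this (Matrix.one_apply_ne hne)
    have hK : x k ≠ y k := by
      intro e
      have := tens_eq_zero _ x y h k
      simp [hok, Yg, e] at this
    have hd' : ∀ z, czd Sb z = czd (Sb.erase k) z *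
        ∏ i ∈ Sb.erase k, if z k = true ∧ z i = true then (-1 : ℂ) else 1 := by
      intro z
      conv_lhs => rw [← Finset.insert_erase hk]
      exact czd_insert _ _ (by simp) z
    rw [hd' x, hd' y, czd_congr _ x y hE, mul_left_comm]
    congr 1
    rw [← Finset.prod_mul_distrib]
    refine Finset.prod_congr rfl fun i hi => ?_
    rw [hE i hi]
    revert hK
    cases x k <;> cases y k <;> cases y i <;> simp

end UmidAux

/-- Logical Pauli constraint of `C^H_mid` for qubits without Hadamard:
for `k ∈ S̄`, `U (X_1 X_k) U† = X_1 Y_k X_S Z_{S̄∖{k}}`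
(qubit `1` is index `⟨0,_⟩ : Fin n`). -/
theorem Umid_pauli_constraint_no_hadamard (n : ℕ) (hn : 3 ≤ n)
    (S Sb : Finset (Fin n)) (hdisj : Disjoint S Sb) (hunion : S ∪ Sb = midSet n) :
    ∀ k ∈ Sb,
      Umid S Sb * (layer Xg {(⟨0, by omega⟩ : Fin n)} * layer Xg {k}) * (Umid S Sb)ᴴ =
        layer Xg {(⟨0, by omega⟩ : Fin n)} * layer Yg {k} * layer Xg S *
          layer Zg (Sb.erase k) := by
  intro k hk
  obtain ⟨o, ho⟩ : ∃ o : Fin n, o = ⟨0, by omega⟩ := ⟨_, rfl⟩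
  rw [← ho]
  have hom : o ∉ midSet n := by simp [midSet, ho]
  rw [← hunion, Finset.mem_union, not_or] at hom
  obtain ⟨hoS, hoSb⟩ := hom
  have hok : k ≠ o := fun e => hoSb (e ▸ hk)
  have hkS : k ∉ S := fun e => Finset.disjoint_left.mp hdisj e hk
  have hU : Umid S Sb * (Umid S Sb)ᴴ = 1 := by
    unfold Umid
    refine UmidAux.mul_conj_one (UmidAux.mul_conj_one (UmidAux.mul_conj_one
      (UmidAux.mul_conj_one (UmidAux.mul_conj_one (UmidAux.mul_conj_one ?_ ?_) ?_) ?_) ?_) ?_) ?_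
    · exact UmidAux.czBlock_unitary Sb
    · exact UmidAux.layer_unitary _ _ UmidAux.Pg_unitary
    · exact UmidAux.layer_unitary _ _ UmidAux.Hg_unitary
    · exact UmidAux.czBlock_unitary S
    · exact UmidAux.layer_unitary _ _ UmidAux.Pg_unitary
    · exact UmidAux.layer_unitary _ _ UmidAux.Hg_unitary
    · exact UmidAux.cx_unitary Sb S hdisj
  have hP : Umid S Sb * (layer Xg {o} * layer Xg {k}) =
      (layer Xg {o} * layer Yg {k} * layer Xg S * layer Zg (Sb.erase k)) * Umid S Sb := by
    unfold Umid
    refine UmidAux.push_mul ?_ (UmidAux.cx_push S Sb hdisj o k hoS hoSb hk)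
    refine UmidAux.push_mul ?_ (UmidAux.push_S S o k Hg Xg Xg Zg hok hoS hkS UmidAux.HX)
    refine UmidAux.push_mul ?_ (UmidAux.push_S S o k Pg Xg Zg Zg hok hoS hkS UmidAux.PZ)
    refine UmidAux.push_mul ?_ (UmidAux.push_czS S o k hok hoS hkS)
    refine UmidAux.push_mul ?_ (UmidAux.push_S S o k Hg Xg Zg Xg hok hoS hkS UmidAux.HZ)
    exact UmidAux.push_mul (UmidAux.push_czSb S Sb hdisj o k hoS hoSb hk)
      (UmidAux.push_P S Sb hdisj o k hoS hoSb hk)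
  rw [hP, Matrix.mul_assoc, hU, Matrix.mul_one]
end

section
/- Let n ≥ 3, let S and S̄ be disjoint sets with S ∪ S̄ = {2,…,n−1}, and let U := CZ⟨S̄⟩ · P_{S̄} · H_S · CZ⟨S⟩ · P_S · H_S · CX_{S̄→S} (matrix product, rightmost factor acting first). Then for every k ∈ S: U · (X_1 X_k) · U† = X_1 X_k. (This is the logical Pauli-constraint mapping X_1 X_k ↦ X_1 X_k realized by the compilation strategy C^H_mid for qubits carrying a Hadamard in the C-QSK.) -/
open Complex Matrix Finset

/-- Tensor product of single-qubit gates. -/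
def tens {n : ℕ} (f : Fin n → Matrix Bool Bool ℂ) : NOp n := fun x y => ∏ j, f j (x j) (y j)

theorem tens_mul {n : ℕ} (f g : Fin n → Matrix Bool Bool ℂ) :
    tens f * tens g = tens (fun j => f j * g j) := by
  ext x y
  simp only [tens, Matrix.mul_apply, Finset.prod_univ_sum, Fintype.piFinset_univ,
    Finset.prod_mul_distrib]

theorem tens_one {n : ℕ} : tens (fun _ : Fin n => (1 : Matrix Bool Bool ℂ)) = 1 := by
  ext x y
  simp only [tens, Matrix.one_apply, Finset.prod_ite_zero, Finset.prod_const_one,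
    Finset.mem_univ, true_imp_iff, funext_iff]

theorem tens_conjTranspose {n : ℕ} (f : Fin n → Matrix Bool Bool ℂ) :
    (tens f)ᴴ = tens (fun j => (f j)ᴴ) := by
  ext x y
  simp [tens, Matrix.conjTranspose_apply]

theorem layer_eq_tens {n : ℕ} (g : Matrix Bool Bool ℂ) (A : Finset (Fin n)) :
    layer g A = tens (fun j => if j ∈ A then g else 1) := by
  ext x y
  simp only [layer, tens]
  refine Finset.prod_congr rfl fun j _ => ?_
  split_ifs with h hh <;> simp_all [Matrix.one_apply]

theorem layer_unitary {n : ℕ} (g : Matrix Bool Bool ℂ) (hg : g * gᴴ = 1)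
    (A : Finset (Fin n)) : layer g A * (layer g A)ᴴ = 1 := by
  rw [layer_eq_tens, tens_conjTranspose, tens_mul, ← tens_one]
  congr 1
  funext j
  split_ifs <;> simp [hg]

theorem layer_comm_of_notMem {n : ℕ} (g h : Matrix Bool Bool ℂ) (A : Finset (Fin n))
    (k : Fin n) (hk : k ∉ A) : Commute (layer g A) (layer h {k}) := by
  rw [Commute, SemiconjBy, layer_eq_tens, layer_eq_tens, tens_mul, tens_mul]
  congr 1
  funext j
  by_cases hj : j = k
  · subst hj; simp [hk]
  · simp [hj]

theorem layer_semiconj {n : ℕ} (g h hh : Matrix Bool Bool ℂ) (hg : g * h = hh * g)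
    (A : Finset (Fin n)) (k : Fin n) (hk : k ∈ A) :
    SemiconjBy (layer g A) (layer h {k}) (layer hh {k}) := by
  rw [SemiconjBy, layer_eq_tens, layer_eq_tens, layer_eq_tens, tens_mul, tens_mul]
  congr 1
  funext j
  by_cases hj : j = k
  · subst hj; simp [hk, hg]
  · simp [hj]

theorem czBlock_comm_of_notMem {n : ℕ} (h : Matrix Bool Bool ℂ) (A : Finset (Fin n))
    (k : Fin n) (hk : k ∉ A) : Commute (czBlock A) (layer h {k}) := by
  ext x y
  rw [czBlock, Matrix.diagonal_mul, Matrix.mul_diagonal, mul_comm]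
  by_cases hxy : ∀ j ∈ A, x j = y j
  · congr 1
    refine Finset.prod_congr rfl fun p hp => ?_
    have hs := (Finset.mem_powersetCard.1 hp).1
    have : (∀ i ∈ p, x i = true) ↔ (∀ i ∈ p, y i = true) :=
      forall₂_congr fun i hi => by rw [hxy i (hs hi)]
    simp only [this]
  · push Not at hxy
    obtain ⟨j, hj, hne⟩ := hxy
    have : layer h {k} x y = 0 := by
      refine Finset.prod_eq_zero (Finset.mem_univ j) ?_
      have : j ≠ k := fun e => hk (e ▸ hj)
      simp [this, hne]
    simp [this]

theorem layer_Zg_diag {n : ℕ} (k : Fin n) :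
    layer Zg {k} = Matrix.diagonal (fun x => if x k then (-1 : ℂ) else 1) := by
  ext x y
  by_cases hxy : x = y
  · subst hxy
    rw [layer, Finset.prod_eq_single k]
    · simp [Zg]
    · intro b _ hb; simp [hb]
    · simp
  · rw [Matrix.diagonal_apply_ne _ hxy]
    obtain ⟨j, hj⟩ := Function.ne_iff.1 hxy
    refine Finset.prod_eq_zero (Finset.mem_univ j) ?_
    by_cases hjk : j = k
    · subst hjk; simp [Zg, hj]
    · simp [hjk, hj]

theorem czBlock_comm_Z {n : ℕ} (A : Finset (Fin n)) (k : Fin n) :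
    Commute (czBlock A) (layer Zg {k}) := by
  rw [layer_Zg_diag, czBlock, Commute, SemiconjBy, Matrix.diagonal_mul_diagonal,
    Matrix.diagonal_mul_diagonal]
  simp only [mul_comm]

theorem czBlock_unitary {n : ℕ} (A : Finset (Fin n)) : czBlock A * (czBlock A)ᴴ = 1 := by
  rw [czBlock, Matrix.diagonal_conjTranspose, Matrix.diagonal_mul_diagonal,
    ← Matrix.diagonal_one]
  congr 1
  funext x
  simp only [Pi.star_apply, star_prod, ← Finset.prod_mul_distrib]
  refine Finset.prod_eq_one fun p _ => ?_
  split_ifs <;> simp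

/-- Matrix of a map on bit strings. -/
def mapOp {n : ℕ} (f : (Fin n → Bool) → (Fin n → Bool)) : NOp n :=
  fun x y => if x = f y then 1 else 0

theorem mapOp_mul {n : ℕ} (f g : (Fin n → Bool) → (Fin n → Bool)) :
    mapOp f * mapOp g = mapOp (f ∘ g) := by
  ext x y
  simp [mapOp, Matrix.mul_apply]

/-- The bit-string map of the CX block. -/
def cxMap {n : ℕ} (A B : Finset (Fin n)) (y : Fin n → Bool) : Fin n → Bool :=
  fun j => if j ∈ B then
    xor (y j) (Nat.bodd (A.filter (fun i => y i = true)).card) else y j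

theorem cxMap_invol {n : ℕ} (A B : Finset (Fin n)) (h : Disjoint B A) (y : Fin n → Bool) :
    cxMap A B (cxMap A B y) = y := by
  have e : A.filter (fun i => cxMap A B y i = true) = A.filter (fun i => y i = true) := by
    refine Finset.filter_congr fun i hi => ?_
    have : i ∉ B := fun hB => Finset.disjoint_left.1 h hB hi
    simp [cxMap, this]
  funext j
  rw [cxMap, e]
  by_cases hj : j ∈ B
  · simp [cxMap, hj]
  · simp [cxMap, hj]

theorem cxBlock_unitary {n : ℕ} (A B : Finset (Fin n)) (h : Disjoint B A) :
    cxBlock A B * (cxBlock A B)ᴴ = 1 := by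
  have e : cxBlock A B = mapOp (cxMap A B) := rfl
  have e2 : (mapOp (cxMap A B))ᴴ = mapOp (cxMap A B) := by
    ext x y
    have : y = cxMap A B x ↔ x = cxMap A B y :=
      ⟨fun t => by rw [t, cxMap_invol A B h], fun t => by rw [t, cxMap_invol A B h]⟩
    simp only [mapOp, Matrix.conjTranspose_apply, this]
    split_ifs <;> simp
  rw [e, e2, mapOp_mul]
  ext x y
  simp [mapOp, cxMap_invol A B h, Matrix.one_apply]

theorem layer_Xg_map {n : ℕ} (k : Fin n) :
    layer Xg {k} = mapOp (fun y => Function.update y k (!y k)) := by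
  ext x y
  simp only [mapOp]
  split_ifs with hx
  · subst hx
    refine Finset.prod_eq_one fun j _ => ?_
    by_cases hj : j = k
    · subst hj; simp [Xg]
    · simp [hj]
  · obtain ⟨j, hj⟩ := Function.ne_iff.1 hx
    refine Finset.prod_eq_zero (Finset.mem_univ j) ?_
    by_cases hjk : j = k
    · subst hjk; simpa [Xg] using hj
    · simpa [hjk] using hj

theorem cxBlock_comm_X {n : ℕ} (A B : Finset (Fin n)) (k : Fin n) (hk : k ∉ A) :
    Commute (cxBlock A B) (layer Xg {k}) := by
  have e : cxBlock A B = mapOp (cxMap A B) := rfl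
  rw [e, layer_Xg_map, Commute, SemiconjBy, mapOp_mul, mapOp_mul]
  congr 1
  funext y
  have e : A.filter (fun i => Function.update y k (!y k) i = true)
      = A.filter (fun i => y i = true) := by
    refine Finset.filter_congr fun i hi => ?_
    have : i ≠ k := fun hB => hk (hB ▸ hi)
    simp [this]
  funext j
  simp only [Function.comp, cxMap, e]
  by_cases hj : j = k
  · subst hj
    by_cases hB : j ∈ B <;> simp [hB]
  · simp [hj, cxMap]

theorem sqrt_two_inv_sq : ((Real.sqrt 2 : ℝ) : ℂ)⁻¹ * ((Real.sqrt 2 : ℝ) : ℂ)⁻¹ = 1 / 2 := by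
  rw [← mul_inv, ← Complex.ofReal_mul, Real.mul_self_sqrt (by norm_num)]
  norm_num

theorem Hg_unitary : Hg * Hgᴴ = 1 := by
  ext a b
  have := sqrt_two_inv_sq
  cases a <;> cases b <;>
    simp [Matrix.mul_apply, Hg, Matrix.conjTranspose_apply] <;> linear_combination 2 * this

theorem Pg_unitary : Pg * Pgᴴ = 1 := by
  ext a b
  cases a <;> cases b <;> simp [Pg, Matrix.mul_apply, Matrix.conjTranspose_apply,
    Matrix.diagonal_apply]

theorem Hg_Xg : Hg * Xg = Zg * Hg := by
  ext a b
  cases a <;> cases b <;> simp [Hg, Xg, Zg, Matrix.mul_apply]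

theorem Hg_Zg : Hg * Zg = Xg * Hg := by
  ext a b
  cases a <;> cases b <;> simp [Hg, Xg, Zg, Matrix.mul_apply]

theorem Pg_Zg : Pg * Zg = Zg * Pg := by
  simp [Pg, Zg, mul_comm]

theorem unitary_mul {n : ℕ} {A B : NOp n} (hA : A * Aᴴ = 1) (hB : B * Bᴴ = 1) :
    (A * B) * (A * B)ᴴ = 1 := by
  rw [Matrix.conjTranspose_mul, Matrix.mul_assoc, ← Matrix.mul_assoc B, hB, Matrix.one_mul, hA]

theorem Umid_unitary {n : ℕ} (S Sb : Finset (Fin n)) (h : Disjoint S Sb) :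
    Umid S Sb * (Umid S Sb)ᴴ = 1 := by
  have hH := layer_unitary Hg Hg_unitary S
  exact unitary_mul (unitary_mul (unitary_mul (unitary_mul (unitary_mul (unitary_mul
    (czBlock_unitary Sb) (layer_unitary Pg Pg_unitary Sb)) hH) (czBlock_unitary S))
    (layer_unitary Pg Pg_unitary S)) hH) (cxBlock_unitary Sb S h)

theorem Umid_comm_out {n : ℕ} (S Sb : Finset (Fin n)) (k : Fin n) (h : k ∉ S) (hh : k ∉ Sb) :
    Commute (Umid S Sb) (layer Xg {k}) := by
  have hH := layer_comm_of_notMem Hg Xg S k h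
  exact ((((((czBlock_comm_of_notMem Xg Sb k hh).mul_left
    (layer_comm_of_notMem Pg Xg Sb k hh)).mul_left hH).mul_left
    (czBlock_comm_of_notMem Xg S k h)).mul_left (layer_comm_of_notMem Pg Xg S k h)).mul_left
    hH).mul_left (cxBlock_comm_X Sb S k hh)

theorem Umid_comm_in {n : ℕ} (S Sb : Finset (Fin n)) (k : Fin n) (h : k ∈ S) (hh : k ∉ Sb) :
    Commute (Umid S Sb) (layer Xg {k}) := by
  have h1 : SemiconjBy (czBlock Sb * layer Pg Sb) (layer Xg {k}) (layer Xg {k}) :=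
    (czBlock_comm_of_notMem Xg Sb k hh).mul_left (layer_comm_of_notMem Pg Xg Sb k hh)
  have h2 := h1.mul_left (layer_semiconj Hg Zg Xg Hg_Zg S k h)
  have h3 := h2.mul_left (czBlock_comm_Z S k)
  have h4 := h3.mul_left (layer_semiconj Pg Zg Zg Pg_Zg S k h)
  have h5 := h4.mul_left (layer_semiconj Hg Xg Zg Hg_Xg S k h)
  exact h5.mul_left (cxBlock_comm_X Sb S k hh)

/-- Logical Pauli constraint of `C^H_mid` for qubits with Hadamard:
for `k ∈ S`, `U (X_1 X_k) U† = X_1 X_k` (qubit `1` is index `⟨0,_⟩ : Fin n`). -/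
theorem Umid_pauli_constraint_hadamard (n : ℕ) (hn : 3 ≤ n)
    (S Sb : Finset (Fin n)) (hdisj : Disjoint S Sb) (hunion : S ∪ Sb = midSet n) :
    ∀ k ∈ S,
      Umid S Sb * (layer Xg {(⟨0, by omega⟩ : Fin n)} * layer Xg {k}) * (Umid S Sb)ᴴ =
        layer Xg {(⟨0, by omega⟩ : Fin n)} * layer Xg {k} := by
  intro k hk
  have hkb : k ∉ Sb := Finset.disjoint_left.1 hdisj hk
  have h0 : (⟨0, by omega⟩ : Fin n) ∉ S ∪ Sb := by
    rw [hunion]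
    simp [midSet]
  rw [Finset.mem_union, not_or] at h0
  have hc := (Umid_comm_out S Sb _ h0.1 h0.2).mul_right (Umid_comm_in S Sb k hk hkb)
  rw [hc.eq, Matrix.mul_assoc, Umid_unitary S Sb hdisj, Matrix.mul_one]
end
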